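/- arXiv:2406.07718 — 2 statements merged into one kernel-verified Lean document; each statement's English description precedes it below -/
import Mathlib

section
/- Let a_1, ..., a_r ∈ ℝ be such that every nonzero integer combination ∑_k h_k a_k is irrational, and let p be a prime. Then there exists m such that for all β, γ ∈ ℝ, the sequence z_j = ((a_1 y_j)/p, ..., (a_r y_j)/p) mod 1, with y_j = j^2 + βj + γ, j = 1, ..., m, has discrepancy D_m(Z) < 1/p^r; consequently some z_j lies in [0, 1/p)^r, i.e., for some j ∈ [1, m], the fractional part of a_k y_j / p lies in [0, 1/p) for all k = 1, ..., r. -/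
open Classical in
/-- The box discrepancy of a finite sequence in the torus (ℝ/ℤ)^r, with torus points
represented by real vectors taken mod 1. -/
noncomputable def discrepancy (m r : ℕ) (z : Fin m → Fin r → ℝ) : ℝ :=
  sSup { d : ℝ | ∃ a b : Fin r → ℝ,
    (∀ i, 0 ≤ a i ∧ a i ≤ b i ∧ b i ≤ 1) ∧
    d = |((Finset.univ.filter fun j : Fin m =>
            ∀ i, a i ≤ Int.fract (z j i) ∧ Int.fract (z j i) < b i).card : ℝ) / m
          - ∏ i, (b i - a i)| }


noncomputable def ee (x : ℝ) : ℂ := Complex.exp (2 * Real.pi * x * Complex.I)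

lemma ee_norm (x : ℝ) : ‖ee x‖ = 1 := by
  have : (2 * Real.pi * x * Complex.I : ℂ) = ((2 * Real.pi * x : ℝ) : ℂ) * Complex.I := by
    push_cast; ring
  rw [ee, this, Complex.norm_exp_ofReal_mul_I]

lemma ee_add (x y : ℝ) : ee (x + y) = ee x * ee y := by
  rw [ee, ee, ee, ← Complex.exp_add]; congr 1; push_cast; ring

lemma ee_conj (x : ℝ) : (starRingEnd ℂ) (ee x) = ee (-x) := by
  rw [ee, ee, ← Complex.exp_conj]; congr 1; simp [map_ofNat (starRingEnd ℂ) 2]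

lemma ee_ne_one {x : ℝ} (hx : Irrational x) : ee x ≠ 1 := by
  intro h
  rw [ee, Complex.exp_eq_one_iff] at h
  obtain ⟨n, hn⟩ := h
  have h2 : (2 * Real.pi * Complex.I : ℂ) ≠ 0 := Complex.two_pi_I_ne_zero
  have h3 : (x : ℂ) = n := by
    apply mul_right_cancel₀ h2
    rw [← hn]; ring
  have h4 : x = n := by exact_mod_cast h3
  exact (Irrational.ne_int hx n) h4

lemma ee_nat_mul (x : ℝ) (n : ℕ) : ee (x * n) = ee x ^ n := by
  rw [ee, ee, ← Complex.exp_nat_mul]; congr 1; push_cast; ring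

lemma ee_geom {θ : ℝ} (h : ee θ ≠ 1) (c : ℝ) (m : ℕ) :
    ‖∑ j ∈ Finset.range m, ee (θ * j + c)‖ ≤ 2 / ‖ee θ - 1‖ := by
  simp_rw [ee_add, ee_nat_mul]
  rw [← Finset.sum_mul, norm_mul, ee_norm, mul_one, geom_sum_eq h, norm_div]
  gcongr
  calc _ ≤ ‖ee θ ^ m‖ + ‖(1:ℂ)‖ := norm_sub_le _ _
    _ = 2 := by rw [norm_pow, ee_norm]; norm_num

lemma shift_err (u : ℕ → ℂ) (hu : ∀ j, ‖u j‖ ≤ 1) (m h : ℕ) :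
    ‖∑ j ∈ Finset.range m, u j - ∑ j ∈ Finset.range m, u (j + h)‖ ≤ 2 * h := by
  have e1 : ∑ j ∈ Finset.range m, u j + ∑ j ∈ Finset.range h, u (m + j)
      = ∑ j ∈ Finset.range h, u j + ∑ j ∈ Finset.range m, u (j + h) := by
    rw [← Finset.sum_range_add, add_comm m h, Finset.sum_range_add]
    simp_rw [add_comm h]
  have e2 : ∑ j ∈ Finset.range m, u j - ∑ j ∈ Finset.range m, u (j + h)
      = ∑ j ∈ Finset.range h, u j - ∑ j ∈ Finset.range h, u (m + j) := by
    linear_combination e1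
  have bd : ∀ v : ℕ → ℂ, (∀ j, ‖v j‖ ≤ 1) → ‖∑ j ∈ Finset.range h, v j‖ ≤ h := by
    intro v hv
    calc _ ≤ ∑ j ∈ Finset.range h, (1:ℝ) := norm_sum_le_of_le _ (fun j _ => hv j)
      _ = h := by simp
  rw [e2]
  calc _ ≤ _ := norm_sub_le _ _
    _ ≤ h + h := add_le_add (bd _ hu) (bd _ (fun j => hu _))
    _ = 2 * h := by ring

lemma weyl_bound {α : ℝ} (hα : Irrational α) (H : ℕ) :
    ∃ C : ℝ, 0 ≤ C ∧ ∀ (m : ℕ) (β γ : ℝ),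
      H * ‖∑ j ∈ Finset.range m, ee (α * (j:ℝ)^2 + β * j + γ)‖
        ≤ 2 * (H:ℝ)^2 + Real.sqrt (m * (m * H + C)) := by
  refine ⟨∑ h ∈ Finset.range H, ∑ h' ∈ Finset.range H,
    2 / ‖ee (2 * α * ((h:ℝ) - h')) - 1‖, by positivity, ?_⟩
  intro m β γ
  set u : ℕ → ℂ := fun j => ee (α * (j:ℝ)^2 + β * j + γ) with hu
  have hu1 : ∀ j, ‖u j‖ = 1 := fun j => ee_norm _
  set S := ∑ j ∈ Finset.range m, u j
  set T := ∑ j ∈ Finset.range m, ∑ h ∈ Finset.range H, u (j + h)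
  have hST : ‖(H:ℂ) * S - T‖ ≤ 2 * (H:ℝ)^2 := by
    have : (H:ℂ) * S - T = ∑ h ∈ Finset.range H,
        (S - ∑ j ∈ Finset.range m, u (j + h)) := by
      rw [Finset.sum_sub_distrib]
      simp [T]
      rw [Finset.sum_comm]
    rw [this]
    calc _ ≤ ∑ h ∈ Finset.range H, (2 * (H:ℝ)) := by
          refine norm_sum_le_of_le _ (fun h hh => ?_)
          refine (shift_err u (fun j => (hu1 j).le) m h).trans ?_
          have := (Finset.mem_range.1 hh).le
          gcongr
      _ = _ := by simp; ring
  have hT : ‖T‖ ^ 2 ≤ m * (m * H + ∑ h ∈ Finset.range H, ∑ h' ∈ Finset.range H,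
    2 / ‖ee (2 * α * ((h:ℝ) - h')) - 1‖) := by
    have c1 : ‖T‖ ^ 2 ≤ m * ∑ j ∈ Finset.range m, ‖∑ h ∈ Finset.range H, u (j + h)‖ ^ 2 := by
      have := sq_sum_le_card_mul_sum_sq (s := Finset.range m)
        (f := fun j => ‖∑ h ∈ Finset.range H, u (j + h)‖)
      rw [Finset.card_range] at this
      refine le_trans ?_ this
      gcongr
      exact norm_sum_le _ _
    refine c1.trans ?_
    gcongr
    have c2 : ((∑ j ∈ Finset.range m, ‖∑ h ∈ Finset.range H, u (j + h)‖ ^ 2 : ℝ) : ℂ)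
        = ∑ h ∈ Finset.range H, ∑ h' ∈ Finset.range H, ∑ j ∈ Finset.range m,
          u (j + h) * (starRingEnd ℂ) (u (j + h')) := by
      push_cast
      have : ∀ j, ((‖∑ h ∈ Finset.range H, u (j + h)‖ : ℂ)) ^ 2 =
          ∑ h ∈ Finset.range H, ∑ h' ∈ Finset.range H,
          u (j + h) * (starRingEnd ℂ) (u (j + h')) := by
        intro j
        rw [← Complex.mul_conj', map_sum, Finset.sum_mul_sum]
      simp_rw [this]
      rw [Finset.sum_comm]
      refine Finset.sum_congr rfl fun h _ => ?_
      rw [Finset.sum_comm]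
    have c3 : ∑ j ∈ Finset.range m, ‖∑ h ∈ Finset.range H, u (j + h)‖ ^ 2
        = ‖((∑ j ∈ Finset.range m, ‖∑ h ∈ Finset.range H, u (j + h)‖ ^ 2 : ℝ) : ℂ)‖ := by
      rw [Complex.norm_real, Real.norm_of_nonneg (by positivity)]
    rw [c3, c2]
    have c4 : ∀ h ∈ Finset.range H, ∀ h' ∈ Finset.range H,
        ‖∑ j ∈ Finset.range m, u (j + h) * (starRingEnd ℂ) (u (j + h'))‖
        ≤ (if h = h' then (m:ℝ) else 0) + 2 / ‖ee (2 * α * ((h:ℝ) - h')) - 1‖ := by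
      intro h _ h' _
      split_ifs with hh
      · have : (0:ℝ) ≤ 2 / ‖ee (2 * α * ((h:ℝ) - h')) - 1‖ := by positivity
        refine le_trans ?_ (le_add_of_nonneg_right this)
        calc _ ≤ ∑ j ∈ Finset.range m, (1:ℝ) := norm_sum_le_of_le _ (fun j _ => by
                rw [norm_mul, RCLike.norm_conj, hu1, hu1]; norm_num)
          _ = m := by simp
      · rw [zero_add]
        have hne : ee (2 * α * ((h:ℝ) - h')) ≠ 1 := by
          apply ee_ne_one
          have hz : (2 * ((h:ℤ) - h') : ℤ) ≠ 0 := by omega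
          have := hα.mul_intCast hz
          convert this using 1
          push_cast; ring
        have := ee_geom hne (α * ((h:ℝ)^2 - (h':ℝ)^2) + β * ((h:ℝ) - h')) m
        refine le_trans (le_of_eq ?_) this
        congr 1
        refine Finset.sum_congr rfl fun j _ => ?_
        rw [hu, ee_conj, ← ee_add]
        congr 1
        push_cast; ring
    calc _ ≤ ∑ h ∈ Finset.range H, ∑ h' ∈ Finset.range H,
        ((if h = h' then (m:ℝ) else 0) + 2 / ‖ee (2 * α * ((h:ℝ) - h')) - 1‖) :=
          norm_sum_le_of_le _ fun h hh => norm_sum_le_of_le _ fun h' hh' => c4 h hh h' hh'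
      _ = _ := by
        simp_rw [Finset.sum_add_distrib]
        congr 1
        simp
        rw [Finset.sum_congr rfl (g := fun _ => (m:ℝ)) (by
          intro x hx; rw [if_pos (Finset.mem_range.1 hx)])]
        simp [mul_comm]
  have hT' := Real.le_sqrt_of_sq_le hT
  calc H * ‖S‖ = ‖(H:ℂ) * S‖ := by rw [norm_mul, Complex.norm_natCast]
    _ = ‖((H:ℂ) * S - T) + T‖ := by congr 1; ring
    _ ≤ _ := norm_add_le _ _
    _ ≤ _ := add_le_add hST hT'

lemma weyl {α : ℝ} (hα : Irrational α) {ε : ℝ} (hε : 0 < ε) :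
    ∃ M : ℕ, ∀ m ≥ M, ∀ (β γ : ℝ),
      ‖∑ j ∈ Finset.range m, ee (α * (j:ℝ)^2 + β * j + γ)‖ ≤ ε * m := by
  obtain ⟨H, hH⟩ := exists_nat_gt (max 1 (8 / ε ^ 2))
  have hH1 : (1:ℝ) < H := (le_max_left _ _).trans_lt hH
  have hH2 : 8 / ε ^ 2 < H := (le_max_right _ _).trans_lt hH
  rw [div_lt_iff₀ (by positivity)] at hH2
  obtain ⟨C, hC, hb⟩ := weyl_bound hα H
  obtain ⟨M, hM⟩ := exists_nat_gt (max (4 * H / ε) C)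
  refine ⟨M, fun m hm β γ => ?_⟩
  have hm' : (M:ℝ) ≤ m := by exact_mod_cast hm
  have h1 : 4 * H / ε < m := ((le_max_left _ _).trans_lt hM).trans_le hm'
  have h2 : C < m := ((le_max_right _ _).trans_lt hM).trans_le hm'
  rw [div_lt_iff₀ hε] at h1
  have hb := hb m β γ
  have hm0 : (0:ℝ) < m := hC.trans_lt h2
  have hs : Real.sqrt (m * (m * H + C)) ≤ ε * m * H / 2 := by
    apply Real.sqrt_le_iff.2 ⟨by positivity, ?_⟩
    have : m * (m * H + C) ≤ (m:ℝ) * (m * H + m * H) := by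
      gcongr; nlinarith
    refine this.trans ?_
    have : (m:ℝ)^2 * H * 8 ≤ (m:ℝ)^2 * H * (H * ε^2) := by gcongr
    nlinarith
  have : (H:ℝ) * ‖∑ j ∈ Finset.range m, ee (α * (j:ℝ)^2 + β * j + γ)‖ ≤ H * (ε * m) := by
    nlinarith
  exact le_of_mul_le_mul_left this (by linarith)

open MeasureTheory

instance circleProb : IsProbabilityMeasure (volume : Measure UnitAddCircle) :=
  ⟨UnitAddCircle.measure_univ⟩

/-- Error term of the empirical sum against the integral. -/
noncomputable def errSum {r : ℕ} (pts : ℕ → Fin r → UnitAddCircle) (m : ℕ)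
    (f : C(Fin r → UnitAddCircle, ℂ)) : ℂ :=
  ∑ j ∈ Finset.range m, f (pts j) - m * ∫ x, f x

lemma int_cont {r : ℕ} (f : C(Fin r → UnitAddCircle, ℂ)) : Integrable (fun x => f x) :=
  f.continuous.integrable_of_hasCompactSupport (HasCompactSupport.of_compactSpace _)

lemma errSum_add {r : ℕ} (pts : ℕ → Fin r → UnitAddCircle) (m : ℕ)
    (f g : C(Fin r → UnitAddCircle, ℂ)) :
    errSum pts m (f + g) = errSum pts m f + errSum pts m g := by
  simp only [errSum, ContinuousMap.add_apply]
  rw [integral_add (int_cont f) (int_cont g), Finset.sum_add_distrib]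
  ring

lemma errSum_smul {r : ℕ} (pts : ℕ → Fin r → UnitAddCircle) (m : ℕ) (c : ℂ)
    (f : C(Fin r → UnitAddCircle, ℂ)) :
    errSum pts m (c • f) = c * errSum pts m f := by
  simp only [errSum, ContinuousMap.smul_apply, smul_eq_mul]
  rw [integral_const_mul, ← Finset.mul_sum]
  ring

lemma errSum_norm {r : ℕ} (pts : ℕ → Fin r → UnitAddCircle) (m : ℕ)
    (f : C(Fin r → UnitAddCircle, ℂ)) : ‖errSum pts m f‖ ≤ 2 * ‖f‖ * m := by
  have h1 : ‖∑ j ∈ Finset.range m, f (pts j)‖ ≤ m * ‖f‖ := by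
    calc _ ≤ ∑ j ∈ Finset.range m, ‖f‖ := norm_sum_le_of_le _ fun j _ => f.norm_coe_le_norm _
      _ = _ := by simp
  have h2 : ‖∫ x, f x‖ ≤ ‖f‖ := by
    have := norm_integral_le_of_norm_le_const (μ := (volume : Measure (Fin r → UnitAddCircle)))
      (f := fun x => f x) (C := ‖f‖) (Filter.Eventually.of_forall fun x => f.norm_coe_le_norm x)
    simpa using this
  calc _ ≤ ‖∑ j ∈ Finset.range m, f (pts j)‖ + ‖(m:ℂ) * ∫ x, f x‖ := norm_sub_le _ _
    _ ≤ m * ‖f‖ + m * ‖f‖ := by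
      rw [norm_mul, Complex.norm_natCast]; gcongr
    _ = _ := by ring

/-- Uniform equidistribution against the test function. -/
def UEq {r : ℕ} {Ω : Type} (pts : Ω → ℕ → Fin r → UnitAddCircle)
    (f : C(Fin r → UnitAddCircle, ℂ)) : Prop :=
  ∀ ε > 0, ∃ M : ℕ, ∀ m ≥ M, ∀ ω, ‖errSum (pts ω) m f‖ ≤ ε * m

lemma UEq_of_approx {r : ℕ} {Ω : Type} {pts : Ω → ℕ → Fin r → UnitAddCircle}
    {m : ℕ} {ω : Ω} {f g : C(Fin r → UnitAddCircle, ℂ)} {ε : ℝ}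
    (h : ‖errSum (pts ω) m g‖ ≤ ε / 3 * m) (hfg : dist f g ≤ ε / 3) :
    ‖errSum (pts ω) m f‖ ≤ ε * m := by
  have : f = (f - g) + g := by simp
  rw [this, errSum_add]
  rw [dist_eq_norm] at hfg
  have h1 := errSum_norm (pts ω) m (f - g)
  have h2 : 2 * ‖f - g‖ * m ≤ 2 * (ε / 3) * m := by gcongr
  refine (norm_add_le _ _).trans ?_
  linarith

lemma UEq_all {r : ℕ} {Ω : Type} (pts : Ω → ℕ → Fin r → UnitAddCircle)
    (h : ∀ n, UEq pts (UnitAddTorus.mFourier n)) (f : C(Fin r → UnitAddCircle, ℂ)) :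
    UEq pts f := by
  have hs : ∀ g ∈ Submodule.span ℂ (Set.range (UnitAddTorus.mFourier (d := Fin r))),
      UEq pts g := by
    intro g hg
    induction hg using Submodule.span_induction with
    | mem x hx => obtain ⟨n, rfl⟩ := hx; exact h n
    | zero =>
      intro ε hε
      refine ⟨0, fun m _ ω => ?_⟩
      have : errSum (pts ω) m 0 = 0 := by simp [errSum]
      rw [this, norm_zero]; positivity
    | add x y _ _ hx hy =>
      intro ε hε
      obtain ⟨M1, h1⟩ := hx (ε / 2) (by positivity)
      obtain ⟨M2, h2⟩ := hy (ε / 2) (by positivity)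
      refine ⟨max M1 M2, fun m hm ω => ?_⟩
      rw [errSum_add]
      have a1 := h1 m (le_trans (le_max_left _ _) hm) ω
      have a2 := h2 m (le_trans (le_max_right _ _) hm) ω
      refine (norm_add_le _ _).trans ?_
      linarith
    | smul c x _ hx =>
      intro ε hε
      obtain ⟨M1, h1⟩ := hx (ε / (‖c‖ + 1)) (by positivity)
      refine ⟨M1, fun m hm ω => ?_⟩
      rw [errSum_smul, norm_mul]
      calc _ ≤ ‖c‖ * (ε / (‖c‖ + 1) * m) := by gcongr; exact h1 m hm ω
        _ ≤ (‖c‖ + 1) * (ε / (‖c‖ + 1) * m) := by gcongr; linarith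
        _ = ε * m := by field_simp
  intro ε hε
  have hf : f ∈ closure (Submodule.span ℂ
      (Set.range (UnitAddTorus.mFourier (d := Fin r))) : Set C(Fin r → UnitAddCircle, ℂ)) := by
    have := UnitAddTorus.span_mFourier_closure_eq_top (d := Fin r)
    rw [← Submodule.topologicalClosure_coe, this]; trivial
  obtain ⟨g, hg, hfg⟩ := Metric.mem_closure_iff.1 hf (ε / 3) (by positivity)
  obtain ⟨M, hM⟩ := hs g hg (ε / 3) (by positivity)
  exact ⟨M, fun m hm ω => UEq_of_approx (hM m hm ω) hfg.le⟩

lemma UEq_compact {r : ℕ} {Ω : Type} (pts : Ω → ℕ → Fin r → UnitAddCircle)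
    (h : ∀ f, UEq pts f) {K : Set C(Fin r → UnitAddCircle, ℂ)} (hK : IsCompact K)
    {ε : ℝ} (hε : 0 < ε) :
    ∃ M : ℕ, ∀ m ≥ M, ∀ ω, ∀ f ∈ K, ‖errSum (pts ω) m f‖ ≤ ε * m := by
  obtain ⟨t, _, htf, ht⟩ := hK.finite_cover_balls (e := ε / 3) (by positivity)
  choose M hM using fun f => h f (ε / 3) (by positivity)
  obtain ⟨N, hN⟩ := (htf.image M).bddAbove
  refine ⟨N, fun m hm ω f hf => ?_⟩
  obtain ⟨g, hg⟩ := Set.mem_iUnion.1 (ht hf)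
  obtain ⟨hgt, hfg⟩ := Set.mem_iUnion.1 hg
  exact UEq_of_approx (hM g m ((hN (Set.mem_image_of_mem M hgt)).trans hm) ω)
    (Metric.mem_ball.1 hfg).le

lemma integral_fourier_zero {n : ℤ} (hn : n ≠ 0) :
    ∫ x : UnitAddCircle, (fourier n x : ℂ) = 0 := by
  have hv : (volume : Measure UnitAddCircle) = AddCircle.haarAddCircle := by
    rw [AddCircle.volume_eq_smul_haarAddCircle]; simp
  rw [hv]
  have := (orthonormal_iff_ite.mp <| orthonormal_fourier (T := 1)) 0 n
  simp only [ContinuousMap.inner_toLp] at this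
  rw [if_neg hn.symm] at this
  simpa using this

lemma integral_mFourier_zero {r : ℕ} {n : Fin r → ℤ} (hn : n ≠ 0) :
    ∫ x : Fin r → UnitAddCircle, (UnitAddTorus.mFourier n x : ℂ) = 0 := by
  simp only [UnitAddTorus.mFourier, ContinuousMap.coe_mk]
  rw [integral_fintype_prod_volume_eq_prod (f := fun i (x : UnitAddCircle) => fourier (n i) x)]
  obtain ⟨i, hi⟩ := Function.ne_iff.mp hn
  exact Finset.prod_eq_zero (Finset.mem_univ i) (integral_fourier_zero hi)

/-- The points of the sequence on the torus. -/
noncomputable def tpts {r : ℕ} (a : Fin r → ℝ) (p : ℕ) (ω : ℝ × ℝ) (j : ℕ) :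
    Fin r → UnitAddCircle :=
  fun k => ((a k * (((j : ℝ) + 1) ^ 2 + ω.1 * ((j : ℝ) + 1) + ω.2) / p : ℝ) : UnitAddCircle)

lemma mFourier_tpts {r : ℕ} (a : Fin r → ℝ) (p : ℕ) (ω : ℝ × ℝ) (j : ℕ) (n : Fin r → ℤ) :
    UnitAddTorus.mFourier n (tpts a p ω j) =
      ee ((∑ k, (n k : ℝ) * a k) / p *
        (((j : ℝ) + 1) ^ 2 + ω.1 * ((j : ℝ) + 1) + ω.2)) := by
  simp only [UnitAddTorus.mFourier, ContinuousMap.coe_mk, tpts, fourier_coe_apply]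
  rw [← Complex.exp_sum, ee]
  congr 1
  push_cast
  rw [Finset.sum_div, Finset.sum_mul, Finset.mul_sum, Finset.sum_mul]
  refine Finset.sum_congr rfl fun k _ => ?_
  field_simp

lemma UEq_tpts {r : ℕ} (a : Fin r → ℝ)
    (ha : ∀ h : Fin r → ℤ, h ≠ 0 → Irrational (∑ k, (h k : ℝ) * a k))
    (p : ℕ) (hp : p ≠ 0) (f : C(Fin r → UnitAddCircle, ℂ)) : UEq (tpts a p) f := by
  refine UEq_all _ (fun n => ?_) f
  intro ε hε
  by_cases hn : n = 0
  · refine ⟨0, fun m _ ω => ?_⟩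
    have : errSum (tpts a p ω) m (UnitAddTorus.mFourier n) = 0 := by
      rw [hn, UnitAddTorus.mFourier_zero]
      simp [errSum]
    rw [this, norm_zero]; positivity
  · have hirr : Irrational ((∑ k, (n k : ℝ) * a k) / p) := (ha n hn).div_natCast hp
    obtain ⟨M, hM⟩ := weyl hirr hε
    set α := (∑ k, (n k : ℝ) * a k) / p with hα
    refine ⟨M, fun m hm ω => ?_⟩
    have := hM m hm (α * (2 + ω.1)) (α * (1 + ω.1 + ω.2))
    refine le_trans (le_of_eq ?_) this
    rw [errSum, integral_mFourier_zero hn, mul_zero, sub_zero]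
    congr 1
    refine Finset.sum_congr rfl fun j _ => ?_
    rw [mFourier_tpts]
    congr 1
    ring

/-- Trapezoid on the line. -/
noncomputable def trapR (δ x : ℝ) (q : ℝ × ℝ) : ℝ :=
  max 0 (min 1 (min ((x - max q.1 0) / δ) ((min q.2 1 - x) / δ)))

lemma trapR_cont (δ : ℝ) : Continuous (fun z : ℝ × (ℝ × ℝ) => trapR δ z.1 z.2) := by
  unfold trapR; fun_prop

/-- Trapezoid as a curried function. -/
noncomputable def trapC (δ : ℝ) : C(ℝ, C(ℝ × ℝ, ℝ)) :=
  ContinuousMap.curry ⟨fun z : ℝ × (ℝ × ℝ) => trapR δ z.1 z.2, trapR_cont δ⟩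

lemma trapC_apply (δ x : ℝ) (q : ℝ × ℝ) : trapC δ x q = trapR δ x q := rfl

/-- Trapezoid on the circle. -/
noncomputable def trap (δ : ℝ) (x : UnitAddCircle) : C(ℝ × ℝ, ℝ) :=
  AddCircle.liftIco 1 0 (trapC δ) x

lemma trap_cont {δ : ℝ} (hδ : 0 < δ) : Continuous (trap δ) := by
  refine AddCircle.liftIco_zero_continuous ?_ (trapC δ).continuous.continuousOn
  ext q
  rw [trapC_apply, trapC_apply, trapR, trapR, max_eq_left, max_eq_left]
  · refine (min_le_right _ _).trans ((min_le_right _ _).trans ?_)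
    apply div_nonpos_of_nonpos_of_nonneg _ hδ.le
    linarith [min_le_right q.2 1]
  · refine (min_le_right _ _).trans ((min_le_left _ _).trans ?_)
    apply div_nonpos_of_nonpos_of_nonneg _ hδ.le
    linarith [le_max_right q.1 0]

lemma trap_coe (δ x : ℝ) (q : ℝ × ℝ) : trap δ (x : UnitAddCircle) q = trapR δ (Int.fract x) q := by
  have h : ((x : ℝ) : UnitAddCircle) = ((Int.fract x : ℝ) : UnitAddCircle) := by
    rw [AddCircle.coe_fract]
  rw [h, trap, AddCircle.liftIco_zero_coe_apply ⟨Int.fract_nonneg x, Int.fract_lt_one x⟩,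
    trapC_apply]

lemma trap_joint {δ : ℝ} (hδ : 0 < δ) :
    Continuous (fun z : (ℝ × ℝ) × UnitAddCircle => trap δ z.2 z.1) := by
  have := trap_cont hδ
  exact (this.comp continuous_snd).eval continuous_fst

lemma trapR_nonneg (δ x : ℝ) (q : ℝ × ℝ) : 0 ≤ trapR δ x q := le_max_left _ _

lemma trapR_le_one (δ x : ℝ) (q : ℝ × ℝ) : trapR δ x q ≤ 1 :=
  max_le zero_le_one (min_le_left _ _)

lemma trapR_zero {δ x a b : ℝ} (hδ : 0 < δ) (h : x < a ∨ b ≤ x) : trapR δ x (a, b) = 0 := by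
  rw [trapR, max_eq_left]
  rcases h with h | h
  · refine (min_le_right _ _).trans ((min_le_left _ _).trans ?_)
    apply div_nonpos_of_nonpos_of_nonneg _ hδ.le
    linarith [le_max_left a 0]
  · refine (min_le_right _ _).trans ((min_le_right _ _).trans ?_)
    apply div_nonpos_of_nonpos_of_nonneg _ hδ.le
    linarith [min_le_left b 1]

lemma trapR_one {δ x a b : ℝ} (hδ : 0 < δ) (ha : 0 ≤ a) (hb : b ≤ 1) (h1 : a + δ ≤ x)
    (h2 : x ≤ b - δ) : trapR δ x (a, b) = 1 := by
  rw [trapR, min_eq_left, max_eq_right zero_le_one]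
  simp only [max_eq_left ha, min_eq_left hb]
  apply le_min
  · rw [le_div_iff₀ hδ]; linarith
  · rw [le_div_iff₀ hδ]; linarith

lemma trap_continuous {δ : ℝ} (hδ : 0 < δ) (q : ℝ × ℝ) :
    Continuous (fun x : UnitAddCircle => trap δ x q) :=
  (trap_joint hδ).comp (by fun_prop : Continuous fun x : UnitAddCircle => (q, x))

lemma trap_integral {δ a b : ℝ} (hδ : 0 < δ) (ha : 0 ≤ a) (hb : b ≤ 1) :
    b - a - 2 * δ ≤ ∫ x : UnitAddCircle, trap δ x (a, b) := by
  by_cases hab : b - a - 2 * δ ≤ 0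
  · refine hab.trans (integral_nonneg fun x => ?_)
    induction x using QuotientAddGroup.induction_on with
    | H x => exact (trapR_nonneg _ _ _).trans_eq (trap_coe δ x (a, b)).symm
  · push Not at hab
    rw [← UnitAddCircle.intervalIntegral_preimage 0, zero_add]
    have hc : Continuous (fun x : ℝ => trap δ (x : UnitAddCircle) (a, b)) :=
      (trap_continuous hδ (a, b)).comp (AddCircle.continuous_mk' 1)
    have h1 : ∫ x in (a + δ)..(b - δ), trap δ (x : UnitAddCircle) (a, b) ≤
        ∫ x in (0:ℝ)..1, trap δ (x : UnitAddCircle) (a, b) := by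
      refine intervalIntegral.integral_mono_interval (by linarith) (by linarith) (by linarith)
        (Filter.Eventually.of_forall fun x => ?_) (hc.intervalIntegrable _ _)
      show 0 ≤ trap δ (x : UnitAddCircle) (a, b)
      rw [trap_coe]; exact trapR_nonneg _ _ _
    refine le_trans (le_of_eq ?_) h1
    rw [intervalIntegral.integral_congr (g := fun _ => (1:ℝ))]
    · simp; ring
    · intro x hx
      rw [Set.uIcc_of_le (by linarith)] at hx
      show trap δ (x : UnitAddCircle) (a, b) = 1
      rw [trap_coe, Int.fract_eq_self.2 ⟨by linarith [hx.1], by linarith [hx.2]⟩]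
      exact trapR_one hδ ha hb hx.1 hx.2

/-- Upper function on the circle. -/
noncomputable def upf (δ : ℝ) (x : UnitAddCircle) (q : ℝ × ℝ) : ℝ :=
  1 - trap δ x (0, q.1) - trap δ x (q.2, 1)

lemma upf_joint {δ : ℝ} (hδ : 0 < δ) :
    Continuous (fun z : (ℝ × ℝ) × UnitAddCircle => upf δ z.2 z.1) := by
  unfold upf
  have h1 : Continuous (fun z : (ℝ × ℝ) × UnitAddCircle => trap δ z.2 (0, z.1.1)) :=
    (trap_joint hδ).comp (by fun_prop :
      Continuous fun z : (ℝ × ℝ) × UnitAddCircle => (((0:ℝ), z.1.1), z.2))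
  have h2 : Continuous (fun z : (ℝ × ℝ) × UnitAddCircle => trap δ z.2 (z.1.2, 1)) :=
    (trap_joint hδ).comp (by fun_prop :
      Continuous fun z : (ℝ × ℝ) × UnitAddCircle => ((z.1.2, (1:ℝ)), z.2))
  exact (continuous_const.sub h1).sub h2

lemma upf_continuous {δ : ℝ} (hδ : 0 < δ) (q : ℝ × ℝ) :
    Continuous (fun x : UnitAddCircle => upf δ x q) := by
  unfold upf
  exact (continuous_const.sub (trap_continuous hδ _)).sub (trap_continuous hδ _)

lemma upf_nonneg {δ : ℝ} (hδ : 0 < δ) (x : UnitAddCircle) {a b : ℝ} (hab : a ≤ b) :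
    0 ≤ upf δ x (a, b) := by
  induction x using QuotientAddGroup.induction_on with
  | H x =>
    have e1 := trap_coe δ x (0, a)
    have e2 := trap_coe δ x (b, 1)
    have b1 := trapR_le_one δ (Int.fract x) (0, a)
    have b2 := trapR_le_one δ (Int.fract x) (b, 1)
    show 0 ≤ 1 - trap δ (x : UnitAddCircle) (0, a) - trap δ (x : UnitAddCircle) (b, 1)
    rw [e1, e2]
    rcases le_or_gt a (Int.fract x) with h | h
    · rw [trapR_zero hδ (Or.inr h)]; linarith
    · rw [trapR_zero (a := b) hδ (Or.inl (h.trans_le hab))]; linarith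

lemma upf_le_one (δ : ℝ) (x : UnitAddCircle) (q : ℝ × ℝ) : upf δ x q ≤ 1 := by
  induction x using QuotientAddGroup.induction_on with
  | H x =>
    have e1 := trap_coe δ x (0, q.1)
    have e2 := trap_coe δ x (q.2, 1)
    show 1 - trap δ (x : UnitAddCircle) (0, q.1) - trap δ (x : UnitAddCircle) (q.2, 1) ≤ 1
    rw [e1, e2]
    linarith [trapR_nonneg δ (Int.fract x) (0, q.1), trapR_nonneg δ (Int.fract x) (q.2, 1)]

lemma upf_one {δ : ℝ} (hδ : 0 < δ) {x a b : ℝ} (h1 : a ≤ Int.fract x) (h2 : Int.fract x < b) :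
    upf δ (x : UnitAddCircle) (a, b) = 1 := by
  simp only [upf]
  rw [trap_coe, trap_coe, trapR_zero hδ (Or.inr h1), trapR_zero hδ (Or.inl h2)]
  ring

lemma integrable_circle {f : UnitAddCircle → ℝ} (hf : Continuous f) : Integrable f :=
  hf.integrable_of_hasCompactSupport (HasCompactSupport.of_compactSpace _)

lemma upf_integral {δ a b : ℝ} (hδ : 0 < δ) (ha : 0 ≤ a) (hab : a ≤ b) (hb : b ≤ 1) :
    ∫ x : UnitAddCircle, upf δ x (a, b) ≤ b - a + 4 * δ := by
  have i1 := integrable_circle (trap_continuous hδ (0, a))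
  have i2 := integrable_circle (trap_continuous hδ (b, 1))
  have h1 := trap_integral hδ le_rfl (hab.trans hb)
  have h2 := trap_integral hδ (ha.trans hab) le_rfl
  have : ∫ x : UnitAddCircle, upf δ x (a, b) =
      1 - (∫ x, trap δ x (0, a)) - (∫ x, trap δ x (b, 1)) := by
    simp only [upf]
    have i3 : Integrable (fun x : UnitAddCircle => 1 - trap δ x (0, a)) :=
      (integrable_const _).sub i1
    rw [integral_sub i3 i2, integral_sub (integrable_const _) i1]
    simp
  rw [this]; linarith

lemma prod_le_add {ι : Type} (s : Finset ι) (u v : ι → ℝ) {η : ℝ} (hη : 0 ≤ η)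
    (hu : ∀ i ∈ s, 0 ≤ u i ∧ u i ≤ 1) (hv : ∀ i ∈ s, 0 ≤ v i ∧ v i ≤ 1)
    (h : ∀ i ∈ s, v i ≤ u i + η) : ∏ i ∈ s, v i ≤ ∏ i ∈ s, u i + s.card * η := by
  classical
  induction s using Finset.induction_on with
  | empty => simp
  | insert i s his ih =>
    rw [Finset.prod_insert his, Finset.prod_insert his, Finset.card_insert_of_notMem his]
    have ih := ih (fun j hj => hu j (Finset.mem_insert_of_mem hj))
      (fun j hj => hv j (Finset.mem_insert_of_mem hj))
      (fun j hj => h j (Finset.mem_insert_of_mem hj))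
    have hui := hu i (Finset.mem_insert_self i s)
    have hvi := hv i (Finset.mem_insert_self i s)
    have hi := h i (Finset.mem_insert_self i s)
    have v1 : ∏ j ∈ s, v j ≤ 1 := Finset.prod_le_one
      (fun j hj => (hv j (Finset.mem_insert_of_mem hj)).1)
      (fun j hj => (hv j (Finset.mem_insert_of_mem hj)).2)
    have v0 : 0 ≤ ∏ j ∈ s, v j := Finset.prod_nonneg
      (fun j hj => (hv j (Finset.mem_insert_of_mem hj)).1)
    have c0 : 0 ≤ s.card * η := by positivity
    push_cast
    calc v i * ∏ j ∈ s, v j ≤ (u i + η) * ∏ j ∈ s, v j := by gcongr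
      _ = u i * ∏ j ∈ s, v j + η * ∏ j ∈ s, v j := by ring
      _ ≤ u i * (∏ j ∈ s, u j + s.card * η) + η * 1 := by
        gcongr; exact hui.1
      _ ≤ _ := by nlinarith [mul_nonneg (sub_nonneg.2 hui.2) c0]

/-- Product test functions, with the box as a parameter. -/
noncomputable def prodTest {r : ℕ} (G : UnitAddCircle → ℝ × ℝ → ℝ)
    (hG : Continuous (fun z : (ℝ × ℝ) × UnitAddCircle => G z.2 z.1)) :
    C((Fin r → ℝ) × (Fin r → ℝ), C(Fin r → UnitAddCircle, ℂ)) :=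
  ContinuousMap.curry ⟨fun z : ((Fin r → ℝ) × (Fin r → ℝ)) × (Fin r → UnitAddCircle) =>
    ((∏ i, G (z.2 i) (z.1.1 i, z.1.2 i) : ℝ) : ℂ), by
      refine Complex.continuous_ofReal.comp (continuous_finsetProd _ fun i _ => ?_)
      exact hG.comp (by fun_prop : Continuous fun z : ((Fin r → ℝ) × (Fin r → ℝ)) ×
        (Fin r → UnitAddCircle) => ((z.1.1 i, z.1.2 i), z.2 i))⟩

lemma prodTest_apply {r : ℕ} (G : UnitAddCircle → ℝ × ℝ → ℝ)
    (hG : Continuous (fun z : (ℝ × ℝ) × UnitAddCircle => G z.2 z.1))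
    (q : (Fin r → ℝ) × (Fin r → ℝ)) (x : Fin r → UnitAddCircle) :
    prodTest G hG q x = ((∏ i, G (x i) (q.1 i, q.2 i) : ℝ) : ℂ) := rfl

lemma prodTest_integral {r : ℕ} (G : UnitAddCircle → ℝ × ℝ → ℝ)
    (hG : Continuous (fun z : (ℝ × ℝ) × UnitAddCircle => G z.2 z.1))
    (q : (Fin r → ℝ) × (Fin r → ℝ)) :
    ∫ x, prodTest G hG q x = ((∏ i, ∫ x, G x (q.1 i, q.2 i) : ℝ) : ℂ) := by
  simp only [prodTest_apply]
  rw [integral_complex_ofReal]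
  congr 1
  exact integral_fintype_prod_volume_eq_prod (𝕜 := ℝ)
    (f := fun i (x : UnitAddCircle) => G x (q.1 i, q.2 i))

lemma prodTest_uniform {r : ℕ} {Ω : Type} (pts : Ω → ℕ → Fin r → UnitAddCircle)
    (h : ∀ f, UEq pts f) (G : UnitAddCircle → ℝ × ℝ → ℝ)
    (hG : Continuous (fun z : (ℝ × ℝ) × UnitAddCircle => G z.2 z.1)) {ε : ℝ} (hε : 0 < ε) :
    ∃ M : ℕ, ∀ m ≥ M, ∀ ω, ∀ a b : Fin r → ℝ, (∀ i, 0 ≤ a i ∧ a i ≤ b i ∧ b i ≤ 1) →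
      |∑ j ∈ Finset.range m, ∏ i, G (pts ω j i) (a i, b i)
        - m * ∏ i, ∫ x, G x (a i, b i)| ≤ ε * m := by
  have hQ : IsCompact ((Set.Icc (0 : Fin r → ℝ) 1) ×ˢ (Set.Icc (0 : Fin r → ℝ) 1)) :=
    isCompact_Icc.prod isCompact_Icc
  obtain ⟨M, hM⟩ := UEq_compact pts h (hQ.image (prodTest G hG).continuous) hε
  refine ⟨M, fun m hm ω a b hab => ?_⟩
  have := hM m hm ω (prodTest G hG (a, b)) (Set.mem_image_of_mem _
    ⟨⟨fun i => (hab i).1, fun i => (hab i).2.1.trans (hab i).2.2⟩,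
      ⟨fun i => (hab i).1.trans (hab i).2.1, fun i => (hab i).2.2⟩⟩)
  rw [errSum, prodTest_integral] at this
  simp only [prodTest_apply] at this
  rw [← Complex.ofReal_sum, ← Complex.ofReal_natCast, ← Complex.ofReal_mul,
    ← Complex.ofReal_sub, Complex.norm_real, Real.norm_eq_abs] at this
  exact this

open Classical in
lemma box_uniform {r : ℕ} {Ω : Type} (z : Ω → ℕ → Fin r → ℝ)
    (h : ∀ f, UEq (fun ω j k => ((z ω j k : ℝ) : UnitAddCircle)) f) {ε : ℝ} (hε : 0 < ε) :
    ∃ M : ℕ, ∀ m ≥ M, ∀ ω, ∀ a b : Fin r → ℝ, (∀ i, 0 ≤ a i ∧ a i ≤ b i ∧ b i ≤ 1) →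
      |(((Finset.range m).filter fun j => ∀ i, a i ≤ Int.fract (z ω j i) ∧
        Int.fract (z ω j i) < b i).card : ℝ) - m * ∏ i, (b i - a i)| ≤ ε * m := by
  obtain ⟨δ, hδ, hδ'⟩ : ∃ δ : ℝ, 0 < δ ∧ r * (4 * δ) ≤ ε / 2 := by
    refine ⟨ε / (8 * (r + 1)), by positivity, ?_⟩
    field_simp
    linarith
  obtain ⟨M1, h1⟩ := prodTest_uniform _ h (fun x q => trap δ x q) (trap_joint hδ)
    (half_pos hε)
  obtain ⟨M2, h2⟩ := prodTest_uniform _ h (fun x q => upf δ x q) (upf_joint hδ)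
    (half_pos hε)
  refine ⟨max M1 M2, fun m hm ω a b hab => ?_⟩
  have h1 := h1 m (le_trans (le_max_left _ _) hm) ω a b hab
  have h2 := h2 m (le_trans (le_max_right _ _) hm) ω a b hab
  rw [abs_le] at h1 h2
  have hcard : (((Finset.range m).filter fun j => ∀ i, a i ≤ Int.fract (z ω j i) ∧
        Int.fract (z ω j i) < b i).card : ℝ) = ∑ j ∈ Finset.range m,
        if (∀ i, a i ≤ Int.fract (z ω j i) ∧ Int.fract (z ω j i) < b i) then (1:ℝ) else 0 := by
    simp
  have tn : ∀ x q, 0 ≤ trap δ x q := by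
    intro x q
    induction x using QuotientAddGroup.induction_on with
    | H x => exact (trapR_nonneg _ _ _).trans_eq (trap_coe δ x q).symm
  have t1 : ∀ x q, trap δ x q ≤ 1 := by
    intro x q
    induction x using QuotientAddGroup.induction_on with
    | H x => exact (trap_coe δ x q).trans_le (trapR_le_one _ _ _)
  have lo : ∑ j ∈ Finset.range m, ∏ i, trap δ ((z ω j i : ℝ) : UnitAddCircle) (a i, b i) ≤
      ∑ j ∈ Finset.range m,
        if (∀ i, a i ≤ Int.fract (z ω j i) ∧ Int.fract (z ω j i) < b i) then (1:ℝ) else 0 := by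
    refine Finset.sum_le_sum fun j _ => ?_
    split_ifs with hj
    · exact Finset.prod_le_one (fun i _ => tn _ _) (fun i _ => t1 _ _)
    · push Not at hj
      obtain ⟨i, hi⟩ := hj
      refine (Finset.prod_eq_zero (Finset.mem_univ i) ?_).le
      rw [trap_coe]
      apply trapR_zero hδ
      rcases lt_or_ge (Int.fract (z ω j i)) (a i) with h | h
      · exact Or.inl h
      · exact Or.inr (hi h)
  have up : (∑ j ∈ Finset.range m,
        if (∀ i, a i ≤ Int.fract (z ω j i) ∧ Int.fract (z ω j i) < b i) then (1:ℝ) else 0) ≤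
      ∑ j ∈ Finset.range m, ∏ i, upf δ ((z ω j i : ℝ) : UnitAddCircle) (a i, b i) := by
    refine Finset.sum_le_sum fun j _ => ?_
    split_ifs with hj
    · refine (Finset.prod_eq_one fun i _ => ?_).ge
      exact upf_one hδ (hj i).1 (hj i).2
    · exact Finset.prod_nonneg fun i _ => upf_nonneg hδ _ (hab i).2.1
  have hu : ∀ i ∈ (Finset.univ : Finset (Fin r)), 0 ≤ b i - a i ∧ b i - a i ≤ 1 := fun i _ =>
    ⟨by linarith [(hab i).2.1], by linarith [(hab i).1, (hab i).2.2]⟩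
  have ile : ∀ f : UnitAddCircle → ℝ, Continuous f → (∀ x, f x ≤ 1) → ∫ x, f x ≤ 1 := by
    intro f hf hf1
    calc ∫ x, f x ≤ ∫ x : UnitAddCircle, (1:ℝ) :=
          integral_mono (integrable_circle hf) (integrable_const _) hf1
      _ = 1 := by simp
  have pl : ∏ i, (b i - a i) ≤ (∏ i, ∫ x, trap δ x (a i, b i)) + r * (4 * δ) := by
    have := prod_le_add Finset.univ (fun i => ∫ x, trap δ x (a i, b i)) (fun i => b i - a i)
      (η := 4 * δ) (by positivity)
      (fun i _ => ⟨integral_nonneg fun x => tn _ _,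
        ile _ (trap_continuous hδ _) fun x => t1 _ _⟩) hu
      (fun i _ => by
        have := trap_integral hδ (hab i).1 (hab i).2.2
        show b i - a i ≤ (∫ x, trap δ x (a i, b i)) + 4 * δ
        linarith)
    simpa using this
  have pu : ∏ i, ∫ x, upf δ x (a i, b i) ≤ ∏ i, (b i - a i) + r * (4 * δ) := by
    have := prod_le_add Finset.univ (fun i => b i - a i) (fun i => ∫ x, upf δ x (a i, b i))
      (η := 4 * δ) (by positivity) hu
      (fun i _ => ⟨integral_nonneg fun x => upf_nonneg hδ x (hab i).2.1,
        ile _ (upf_continuous hδ (a i, b i))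
          fun x => upf_le_one _ _ _⟩)
      (fun i _ => upf_integral hδ (hab i).1 (hab i).2.1 (hab i).2.2)
    simpa using this
  have hm0 : (0:ℝ) ≤ m := Nat.cast_nonneg m
  have pl' := mul_le_mul_of_nonneg_left (pl.trans (add_le_add_right hδ' _)) hm0
  have pu' := mul_le_mul_of_nonneg_left (pu.trans (add_le_add_right hδ' _)) hm0
  rw [hcard, abs_le]
  constructor <;> linarith [h1.1, h2.2]

/-- If every nonzero integer combination of a_1, ..., a_r is irrational and p is prime,
then there is m such that for all β, γ, the sequence z_j = (a_k y_j / p)_k mod 1,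
y_j = j² + βj + γ (j = 1, ..., m), has discrepancy < 1/p^r; consequently some z_j
lies in [0, 1/p)^r. (Indices j : Fin m correspond to j+1 ∈ {1, ..., m}.) -/
theorem stmt_9 (r : ℕ) (a : Fin r → ℝ)
    (ha : ∀ h : Fin r → ℤ, h ≠ 0 → Irrational (∑ k, (h k : ℝ) * a k))
    (p : ℕ) (hp : p.Prime) :
    ∃ m : ℕ, 0 < m ∧ ∀ β γ : ℝ,
      discrepancy m r (fun j k =>
          a k * (((j : ℝ) + 1) ^ 2 + β * ((j : ℝ) + 1) + γ) / p) < 1 / (p : ℝ) ^ r ∧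
      ∃ j : Fin m, ∀ k : Fin r,
        Int.fract (a k * (((j : ℝ) + 1) ^ 2 + β * ((j : ℝ) + 1) + γ) / p)
          ∈ Set.Ico 0 (1 / (p : ℝ)) := by
  classical
  have hp0 : (0:ℝ) < p := by exact_mod_cast hp.pos
  have hp1 : (1:ℝ) ≤ p := by exact_mod_cast hp.one_le
  set ε : ℝ := 1 / (p : ℝ) ^ r / 2 with hεd
  have hε : 0 < ε := by positivity
  have hε2 : ε < 1 / (p : ℝ) ^ r := half_lt_self (by positivity)
  obtain ⟨M, hM⟩ := box_uniform
    (fun (ω : ℝ × ℝ) (j : ℕ) (k : Fin r) =>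
      a k * (((j : ℝ) + 1) ^ 2 + ω.1 * ((j : ℝ) + 1) + ω.2) / p)
    (fun f => UEq_tpts a ha p hp.ne_zero f) hε
  refine ⟨M + 1, Nat.succ_pos M, fun β γ => ?_⟩
  have hM := hM (M + 1) (Nat.le_succ M) (β, γ)
  have hm0 : (0:ℝ) < ((M + 1 : ℕ) : ℝ) := by positivity
  constructor
  · refine lt_of_le_of_lt ?_ hε2
    refine Real.sSup_le ?_ hε.le
    rintro d ⟨u, v, huv, rfl⟩
    have := hM u v huv
    have hc : ((Finset.univ.filter fun j : Fin (M + 1) => ∀ i,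
        u i ≤ Int.fract (a i * (((j : ℝ) + 1) ^ 2 + β * ((j : ℝ) + 1) + γ) / p) ∧
        Int.fract (a i * (((j : ℝ) + 1) ^ 2 + β * ((j : ℝ) + 1) + γ) / p) < v i).card : ℝ)
      = (((Finset.range (M + 1)).filter fun j : ℕ => ∀ i,
        u i ≤ Int.fract (a i * (((j : ℝ) + 1) ^ 2 + β * ((j : ℝ) + 1) + γ) / p) ∧
        Int.fract (a i * (((j : ℝ) + 1) ^ 2 + β * ((j : ℝ) + 1) + γ) / p) < v i).card : ℝ) := by
      rw [Finset.card_filter, Finset.card_filter]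
      rw [← Fin.sum_univ_eq_sum_range (fun j : ℕ => if (∀ i,
        u i ≤ Int.fract (a i * (((j : ℝ) + 1) ^ 2 + β * ((j : ℝ) + 1) + γ) / p) ∧
        Int.fract (a i * (((j : ℝ) + 1) ^ 2 + β * ((j : ℝ) + 1) + γ) / p) < v i)
        then 1 else 0)]
    rw [← hc] at this
    rw [div_sub' hm0.ne', abs_div, abs_of_pos hm0, div_le_iff₀ hm0]
    convert this using 1
  · have := hM (fun _ => 0) (fun _ => 1 / (p:ℝ)) (fun i => ⟨le_rfl, by positivity, by
      rw [div_le_one hp0]; exact hp1⟩)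
    rw [abs_le] at this
    have h1 := this.1
    simp only [sub_zero, Finset.prod_const, Finset.card_univ, Fintype.card_fin] at h1
    rw [one_div_pow] at h1
    have hpos := mul_pos hm0 (sub_pos.2 hε2)
    have hcp : 0 < ((Finset.range (M + 1)).filter fun j : ℕ => ∀ i,
        0 ≤ Int.fract (a i * (((j : ℝ) + 1) ^ 2 + β * ((j : ℝ) + 1) + γ) / p) ∧
        Int.fract (a i * (((j : ℝ) + 1) ^ 2 + β * ((j : ℝ) + 1) + γ) / p) < 1 / (p:ℝ)).card := by
      rw [← Nat.cast_pos (α := ℝ)]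
      refine lt_of_lt_of_le hpos ?_
      linarith
    obtain ⟨j, hj⟩ := Finset.card_pos.1 hcp
    rw [Finset.mem_filter, Finset.mem_range] at hj
    exact ⟨⟨j, hj.1⟩, fun k => hj.2 k⟩
end

section
/- Let X ⊂ ℝ^d be a finite non-spherical set. Then there exists a natural number m and, for every n, a red/blue colouring of ℝ^n such that there is no red isometric copy of X and no blue set of m collinear points with consecutive points at unit distance. Equivalently, ℝ^n ↛ (X, ℓ_m) for all n. -/
/-- A finite set is spherical if it embeds isometrically into a sphere of some dimension. -/
def Spherical {d : ℕ} (X : Set (EuclideanSpace ℝ (Fin d))) : Prop :=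
  ∃ (N : ℕ) (f : EuclideanSpace ℝ (Fin d) → EuclideanSpace ℝ (Fin N))
    (c : EuclideanSpace ℝ (Fin N)) (ρ : ℝ),
    (∀ x ∈ X, ∀ y ∈ X, dist (f x) (f y) = dist x y) ∧ ∀ x ∈ X, dist (f x) c = ρ

/-- `IsCopy X Y`: `Y` is an isometric copy of `X`. -/
def IsCopy {d n : ℕ} (X : Set (EuclideanSpace ℝ (Fin d)))
    (Y : Set (EuclideanSpace ℝ (Fin n))) : Prop :=
  ∃ f : EuclideanSpace ℝ (Fin d) → EuclideanSpace ℝ (Fin n),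
    (∀ x ∈ X, ∀ y ∈ X, dist (f x) (f y) = dist x y) ∧ f '' X = Y


lemma vdc_core (u : ℕ → ℂ) (hu : ∀ j, ‖u j‖ = 1) (H N : ℕ) (K : ℝ) (hK : 0 ≤ K)
    (h1 : ∀ h < H, ∀ h' < H, h ≠ h' →
      ‖∑ j ∈ Finset.range N, u (j + h) * (starRingEnd ℂ) (u (j + h'))‖ ≤ K) :
    ‖∑ j ∈ Finset.range N, ∑ h ∈ Finset.range H, u (j + h)‖ ^ 2
      ≤ N * (H * N + H ^ 2 * K) := by
  have e1 : ‖∑ j ∈ Finset.range N, ∑ h ∈ Finset.range H, u (j + h)‖ ^ 2 ≤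
      N * ∑ j ∈ Finset.range N, ‖∑ h ∈ Finset.range H, u (j + h)‖ ^ 2 := by
    calc _ ≤ (∑ j ∈ Finset.range N, ‖∑ h ∈ Finset.range H, u (j + h)‖) ^ 2 := by
          gcongr; exact norm_sum_le _ _
      _ ≤ _ := by
          have := sq_sum_le_card_mul_sum_sq (s := Finset.range N)
            (f := fun j => ‖∑ h ∈ Finset.range H, u (j + h)‖)
          simpa using this
  refine e1.trans ?_
  gcongr
  have e2 : ((∑ j ∈ Finset.range N, ‖∑ h ∈ Finset.range H, u (j + h)‖ ^ 2 : ℝ) : ℂ) =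
      ∑ h ∈ Finset.range H, ∑ h' ∈ Finset.range H,
        ∑ j ∈ Finset.range N, u (j + h) * (starRingEnd ℂ) (u (j + h')) := by
    push_cast
    have : ∀ j, ((‖∑ h ∈ Finset.range H, u (j + h)‖ : ℂ)) ^ 2 =
        ∑ h ∈ Finset.range H, ∑ h' ∈ Finset.range H, u (j + h) * (starRingEnd ℂ) (u (j + h')) := by
      intro j
      rw [← Complex.mul_conj', map_sum, Finset.sum_mul_sum]
    simp_rw [this]
    rw [Finset.sum_comm]
    refine Finset.sum_congr rfl fun h _ => ?_
    rw [Finset.sum_comm]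
  have e3 : (∑ j ∈ Finset.range N, ‖∑ h ∈ Finset.range H, u (j + h)‖ ^ 2 : ℝ) =
      ‖((∑ j ∈ Finset.range N, ‖∑ h ∈ Finset.range H, u (j + h)‖ ^ 2 : ℝ) : ℂ)‖ := by
    rw [Complex.norm_real, Real.norm_of_nonneg]
    positivity
  rw [e3, e2]
  calc _ ≤ ∑ h ∈ Finset.range H, ∑ h' ∈ Finset.range H, ((if h = h' then (N : ℝ) else 0) + K) := by
        refine (norm_sum_le _ _).trans (Finset.sum_le_sum fun h hh => ?_)
        refine (norm_sum_le _ _).trans (Finset.sum_le_sum fun h' hh' => ?_)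
        split_ifs with heq
        · subst heq
          refine (norm_sum_le _ _).trans ?_
          simp [hu, hK]
        · simpa using h1 h (by simpa using hh) h' (by simpa using hh') heq
    _ = _ := by
        simp [Finset.sum_add_distrib]
        have : ∑ x ∈ Finset.range H, (if x < H then (N:ℝ) else 0) = H * N := by
          rw [Finset.sum_congr rfl (g := fun _ => (N:ℝ))]
          · simp
          · intro x hx; simp at hx; simp [hx]
        rw [this]; ring

lemma vdc_shift (u : ℕ → ℂ) (hu : ∀ j, ‖u j‖ = 1) (N h : ℕ) :
    ‖∑ j ∈ Finset.range N, u j - ∑ j ∈ Finset.range N, u (j + h)‖ ≤ 2 * h := by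
  have a1 := Finset.sum_range_add u h N
  have a2 := Finset.sum_range_add u N h
  rw [add_comm N h, a1] at a2
  have : ∑ j ∈ Finset.range N, u j - ∑ j ∈ Finset.range N, u (j + h) =
    ∑ j ∈ Finset.range h, u j - ∑ j ∈ Finset.range h, u (N + j) := by
    simp_rw [add_comm _ h]
    linear_combination -a2
  rw [this]
  have b : ∀ v : ℕ → ℂ, (∀ j, ‖v j‖ = 1) → ‖∑ j ∈ Finset.range h, v j‖ ≤ h := by
    intro v hv
    refine (norm_sum_le _ _).trans ?_
    simp [hv]
  have := b u hu
  have := b (fun j => u (N + j)) (fun j => hu _)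
  refine (norm_sub_le _ _).trans ?_
  linarith

lemma geom_bd (q : ℂ) (hq : ‖q‖ = 1) (hq1 : q ≠ 1) (N : ℕ) :
    ‖∑ j ∈ Finset.range N, q ^ j‖ ≤ 2 / ‖q - 1‖ := by
  rw [geom_sum_eq hq1, norm_div]
  gcongr
  refine (norm_sub_le _ _).trans ?_
  simp [hq]; norm_num

lemma weyl_sum (A : ℂ) (hA : ‖A‖ = 1) (hA1 : ∀ h : ℕ, 0 < h → A ^ h ≠ 1) (ε : ℝ) (hε : 0 < ε) :
    ∃ N0 : ℕ, ∀ N ≥ N0, ∀ B C : ℂ, ‖B‖ = 1 → ‖C‖ = 1 →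
      ‖∑ j ∈ Finset.range N, A ^ (j ^ 2) * B ^ j * C‖ ≤ ε * N := by
  obtain ⟨H, hH⟩ := exists_nat_gt (8 / ε ^ 2)
  have hHpos : (0 : ℝ) < H := lt_trans (by positivity) hH
  set K : ℝ := ∑ k ∈ Finset.range H, 2 / ‖A ^ (2 * k) - 1‖ with hKdef
  have hK : 0 ≤ K := Finset.sum_nonneg fun _ _ => by positivity
  obtain ⟨N0, hN0⟩ := exists_nat_gt (max (K * H) (4 * H / ε))
  refine ⟨N0, fun N hN B C hB hC => ?_⟩
  have hN' : (N0 : ℝ) ≤ N := by exact_mod_cast hN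
  have hNa : K * H ≤ N := by linarith [le_max_left (K * H) (4 * H / ε)]
  have hNb : 4 * H / ε ≤ N := by linarith [le_max_right (K * H) (4 * H / ε)]
  set u : ℕ → ℂ := fun j => A ^ (j ^ 2) * B ^ j * C with hudef
  have hu : ∀ j, ‖u j‖ = 1 := by intro j; simp [hudef, hA, hB, hC]
  have key : ∀ h k, 0 < k → k < H →
      ‖∑ j ∈ Finset.range N, u (j + (h + k)) * (starRingEnd ℂ) (u (j + h))‖ ≤ K := by
    intro h k hk hkH
    have : ∀ j, u (j + (h + k)) * (starRingEnd ℂ) (u (j + h)) =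
        (A ^ (2 * k * h + k ^ 2) * B ^ k) * (A ^ (2 * k)) ^ j := by
      intro j
      have e : u (j + (h + k)) =
        (A ^ (2 * k * h + k ^ 2) * B ^ k) * (A ^ (2 * k)) ^ j * u (j + h) := by
        simp only [hudef]; ring
      rw [e, mul_assoc, Complex.mul_conj', hu]; simp
    simp_rw [this]
    rw [← Finset.mul_sum, norm_mul]
    have n1 : ‖A ^ (2 * k * h + k ^ 2) * B ^ k‖ = 1 := by simp [hA, hB]
    rw [n1, one_mul]
    refine (geom_bd _ (by simp [hA]) (hA1 _ (by positivity)) N).trans ?_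
    exact Finset.single_le_sum (f := fun k => 2 / ‖A ^ (2 * k) - 1‖)
      (fun _ _ => by positivity) (Finset.mem_range.2 hkH)
  have core := vdc_core u hu H N K hK (by
    intro h hh h' hh' hne
    rcases lt_or_gt_of_ne hne with hlt | hlt
    · obtain ⟨k, rfl⟩ := Nat.exists_eq_add_of_lt hlt
      have := key h (k + 1) (by omega) (by omega)
      rw [← Complex.norm_conj, map_sum]
      refine le_trans (le_of_eq ?_) this
      congr 1
      refine Finset.sum_congr rfl fun j _ => ?_
      rw [map_mul, Complex.conj_conj, mul_comm, add_assoc h]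
    · obtain ⟨k, rfl⟩ := Nat.exists_eq_add_of_lt hlt
      have := key h' (k + 1) (by omega) (by omega)
      simpa only [add_assoc] using this)
  set T := ‖∑ j ∈ Finset.range N, ∑ h ∈ Finset.range H, u (j + h)‖
  set S := ∑ j ∈ Finset.range N, u j
  have hT : T ≤ ε * H * N / 2 := by
    apply le_of_sq_le_sq _ (by positivity)
    refine core.trans ?_
    have h8 : 8 < H * ε ^ 2 := by rwa [div_lt_iff₀ (by positivity)] at hH
    have : (N : ℝ) * (H * N + H ^ 2 * K) ≤ N * (H * N + H * N) := by
      have h9 := mul_le_mul_of_nonneg_left hNa hHpos.le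
      have h10 : (H : ℝ) ^ 2 * K ≤ H * N := by linarith
      gcongr
    refine this.trans ?_
    have : 0 ≤ (H * N ^ 2 : ℝ) * (H * ε ^ 2 - 8) := mul_nonneg (by positivity) (by linarith)
    nlinarith
  have hS : ‖(H : ℂ) * S‖ ≤ T + 2 * H ^ 2 := by
    have e : (H : ℂ) * S = (∑ j ∈ Finset.range N, ∑ h ∈ Finset.range H, u (j + h)) +
        ∑ h ∈ Finset.range H, (S - ∑ j ∈ Finset.range N, u (j + h)) := by
      rw [Finset.sum_sub_distrib, Finset.sum_comm]; simp
    rw [e]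
    refine (norm_add_le _ _).trans ?_
    gcongr
    refine (norm_sum_le _ _).trans ?_
    calc _ ≤ ∑ h ∈ Finset.range H, (2 * H : ℝ) := by
          refine Finset.sum_le_sum fun h hh => (vdc_shift u hu N h).trans ?_
          have : (h : ℝ) ≤ H := by exact_mod_cast (Finset.mem_range.1 hh).le
          linarith
      _ = _ := by simp; ring
  rw [norm_mul, Complex.norm_natCast] at hS
  rw [div_le_iff₀ hε] at hNb
  have : (H : ℝ) * ‖S‖ ≤ H * (ε * N) := by nlinarith
  exact le_of_mul_le_mul_left this hHpos

lemma exists_coeff {d : ℕ} (s : Finset (EuclideanSpace ℝ (Fin d)))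
    (h : ∀ c : EuclideanSpace ℝ (Fin d) → ℝ, ∑ x ∈ s, c x = 0 → ∑ x ∈ s, c x • x = 0 →
      ∑ x ∈ s, c x * ‖x‖ ^ 2 = 0) :
    ∃ (p : EuclideanSpace ℝ (Fin d)) (ρ : ℝ), ∀ x ∈ s, dist x p = ρ := by
  classical
  let E := EuclideanSpace ℝ (Fin d)
  let A : (E → ℝ) →ₗ[ℝ] ℝ × E :=
    { toFun := fun c => (∑ x ∈ s, c x, ∑ x ∈ s, c x • x)
      map_add' := by intro a b; simp [Finset.sum_add_distrib, add_smul]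
      map_smul' := by intro a b; simp [Finset.mul_sum, Finset.smul_sum, mul_smul] }
  let Bf : (E → ℝ) →ₗ[ℝ] ℝ :=
    { toFun := fun c => ∑ x ∈ s, c x * ‖x‖ ^ 2
      map_add' := by intro a b; simp [Finset.sum_add_distrib, add_mul]
      map_smul' := by intro a b; simp [Finset.mul_sum, mul_assoc] }
  have hmem : Bf ∈ LinearMap.range A.dualMap := by
    rw [LinearMap.range_dualMap_eq_dualAnnihilator_ker, Submodule.mem_dualAnnihilator]
    intro c hc
    have hc' : A c = 0 := hc
    exact h c (congrArg Prod.fst hc') (congrArg Prod.snd hc')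
  obtain ⟨L, hL⟩ := hmem
  let ℓ : E →ₗ[ℝ] ℝ := L ∘ₗ LinearMap.inr ℝ ℝ E
  let v : E := (InnerProductSpace.toDual ℝ E).symm (LinearMap.toContinuousLinearMap ℓ)
  have hv : ∀ x, inner ℝ v x = ℓ x := by
    intro x
    simp [v]
  have hx : ∀ x ∈ s, ‖x‖ ^ 2 = L (1, 0) + inner ℝ v x := by
    intro x hx
    have := LinearMap.congr_fun hL (Pi.single x 1)
    have e1 : A (Pi.single x 1) = (1, x) := by
      simp [A, Pi.single_apply, hx, ite_smul]
    have e2 : Bf (Pi.single x 1) = ‖x‖ ^ 2 := by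
      simp [Bf, Pi.single_apply, hx]
    rw [LinearMap.dualMap_apply, e1, e2] at this
    rw [← this, hv]
    simp only [ℓ, LinearMap.comp_apply, LinearMap.inr_apply, ← map_add]
    simp
  refine ⟨(1 / 2 : ℝ) • v, √(L (1, 0) + ‖v‖ ^ 2 / 4), fun x hxs => ?_⟩
  rw [dist_eq_norm, ← Real.sqrt_sq (norm_nonneg (x - (1 / 2 : ℝ) • v))]
  congr 1
  rw [norm_sub_sq_real, hx x hxs, inner_smul_right, norm_smul, real_inner_comm]
  norm_num
  ring

lemma copy_sum {d n : ℕ} (s : Finset (EuclideanSpace ℝ (Fin d)))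
    (c : EuclideanSpace ℝ (Fin d) → ℝ) (h0 : ∑ x ∈ s, c x = 0) (h1 : ∑ x ∈ s, c x • x = 0)
    (f : EuclideanSpace ℝ (Fin d) → EuclideanSpace ℝ (Fin n))
    (hf : ∀ x ∈ s, ∀ y ∈ s, dist (f x) (f y) = dist x y) :
    ∑ x ∈ s, c x * ‖f x‖ ^ 2 = ∑ x ∈ s, c x * ‖x‖ ^ 2 := by
  have gen : ∀ {k : ℕ} (g : EuclideanSpace ℝ (Fin d) → EuclideanSpace ℝ (Fin k)) (y),
      ∑ x ∈ s, c x * dist (g x) y ^ 2 =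
      ∑ x ∈ s, c x * ‖g x‖ ^ 2 - 2 * inner ℝ (∑ x ∈ s, c x • g x) y := by
    intro k g y
    have : ∀ x, c x * dist (g x) y ^ 2 =
        c x * ‖g x‖ ^ 2 - 2 * inner ℝ (c x • g x) y + c x * ‖y‖ ^ 2 := by
      intro x
      rw [dist_eq_norm, norm_sub_sq_real, inner_smul_left]
      simp; ring
    simp_rw [this]
    rw [Finset.sum_add_distrib, Finset.sum_sub_distrib, ← Finset.sum_mul, h0, sum_inner,
      Finset.mul_sum]
    simp
  set w := ∑ x ∈ s, c x • f x with hw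
  set b := ∑ x ∈ s, c x * ‖x‖ ^ 2
  set b' := ∑ x ∈ s, c x * ‖f x‖ ^ 2
  have e : ∀ y ∈ s, b' - 2 * inner ℝ w (f y) = b := by
    intro y hy
    have g1 := gen f (f y)
    have g2 := gen (fun x => x) y
    rw [h1] at g2
    rw [← g1, Finset.sum_congr rfl (fun x hx => by rw [hf x hx y hy]), g2]
    simp [b]
  have hw0 : inner ℝ w w = (0 : ℝ) := by
    have t1 : inner ℝ w w = ∑ y ∈ s, c y * inner ℝ w (f y) := by
      nth_rewrite 2 [hw]
      rw [inner_sum]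
      simp [inner_smul_right]
    have t2 : ∑ y ∈ s, c y * inner ℝ w (f y) = ∑ y ∈ s, c y * ((b' - b) / 2) := by
      refine Finset.sum_congr rfl fun y hy => ?_
      rw [← e y hy]; ring
    rw [t1, t2, ← Finset.sum_mul, h0, zero_mul]
  have hw1 : w = 0 := inner_self_eq_zero.1 hw0
  rcases s.eq_empty_or_nonempty with rfl | ⟨y, hy⟩
  · simp [b, b']
  · have := e y hy
    rw [hw1] at this
    simpa using this

lemma exists_scale (S : Set ℝ) (hS : S.Countable) (h0 : ∀ s ∈ S, s ≠ 0) :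
    ∃ l : ℝ, ∀ s ∈ S, Irrational (l * s) := by
  by_contra! hcon
  have : (Set.univ : Set ℝ) ⊆ ⋃ s ∈ S, Set.range (fun q : ℚ => (q : ℝ) / s) := by
    intro l _
    obtain ⟨s, hs, hl⟩ := hcon l
    obtain ⟨q, hq⟩ := exists_rat_of_not_irrational hl
    simp only [Set.mem_iUnion]
    refine ⟨s, hs, q, ?_⟩
    simp only [← hq]
    field_simp [h0 s hs]
  exact Set.not_countable_univ ((hS.biUnion fun s _ => Set.countable_range _).mono this)

lemma exists_zbasis {ι : Type*} (s : Finset ι) (c : ι → ℝ) :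
    ∃ (D : ℕ) (e : Fin D → ℝ) (k : ι → Fin D → ℤ),
      (∀ n : Fin D → ℤ, n ≠ 0 → ∑ l, (n l : ℝ) * e l ≠ 0) ∧
      ∀ x ∈ s, c x = ∑ l, (k x l : ℝ) * e l := by
  classical
  let W : Submodule ℤ ℝ := Submodule.span ℤ (c '' s)
  have : Module.Finite ℤ W := Module.Finite.span_of_finite ℤ (s.finite_toSet.image c)
  let bs := Module.finBasis ℤ W
  refine ⟨_, fun l => (bs l : ℝ), fun x l => if h : c x ∈ W then bs.repr ⟨c x, h⟩ l else 0, ?_, ?_⟩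
  · intro n hn hsum
    apply hn
    have li := bs.linearIndependent
    rw [Fintype.linearIndependent_iff] at li
    ext l
    refine li n ?_ l
    apply Subtype.ext
    simpa using hsum
  · intro x hx
    have h : c x ∈ W := Submodule.subset_span ⟨x, hx, rfl⟩
    have h2 : ((∑ l, bs.repr ⟨c x, h⟩ l • bs l : W) : ℝ) = c x := by rw [bs.sum_repr]
    simp only [h, dif_pos]
    refine h2.symm.trans ?_
    simp only [Submodule.coe_sum, Submodule.coe_smul, zsmul_eq_mul]

section Equidistribution
open MeasureTheory UnitAddTorus

noncomputable def torusMeas (D : ℕ) : Measure (UnitAddTorus (Fin D)) :=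
  Measure.pi (fun _ => (AddCircle.haarAddCircle : Measure UnitAddCircle))

instance torusMeas_prob (D : ℕ) : IsProbabilityMeasure (torusMeas D) := by
  unfold torusMeas; infer_instance

instance torusMeas_open (D : ℕ) : (torusMeas D).IsOpenPosMeasure := by
  unfold torusMeas; infer_instance

instance torusMeas_inv (D : ℕ) : (torusMeas D).IsAddLeftInvariant := by
  unfold torusMeas; infer_instance

lemma mF_add {D : ℕ} (n : Fin D → ℤ) (x y : UnitAddTorus (Fin D)) :
    mFourier n (x + y) = mFourier n x * mFourier n y := by
  simp [mFourier, fourier_apply, Finset.prod_mul_distrib, AddCircle.toCircle_add]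

lemma mF_nsmul {D : ℕ} (n : Fin D → ℤ) (x : UnitAddTorus (Fin D)) (j : ℕ) :
    mFourier n (j • x) = mFourier n x ^ j := by
  induction j with
  | zero => simp [mFourier]
  | succ j ih => rw [succ_nsmul, mF_add, ih, pow_succ]

lemma mF_norm {D : ℕ} (n : Fin D → ℤ) (x : UnitAddTorus (Fin D)) : ‖mFourier n x‖ = 1 := by
  simp only [mFourier, fourier_apply, ContinuousMap.coe_mk, norm_prod, Circle.norm_coe,
    Finset.prod_const_one]

lemma mF_coe {D : ℕ} (n : Fin D → ℤ) (x : Fin D → ℝ) :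
    mFourier n (fun l => (x l : UnitAddCircle)) =
      AddCircle.toCircle ((∑ l, (n l : ℝ) * x l : ℝ) : UnitAddCircle) := by
  have : ((∑ l, (n l : ℝ) * x l : ℝ) : UnitAddCircle) = ∑ l, n l • (x l : UnitAddCircle) := by
    have h := map_sum (QuotientAddGroup.mk' (AddSubgroup.zmultiples (1 : ℝ)))
      (fun l => (n l : ℝ) * x l) Finset.univ
    refine h.trans (Finset.sum_congr rfl fun l _ => ?_)
    rw [← AddCircle.coe_zsmul, zsmul_eq_mul]
    rfl
  rw [this]
  simp only [mFourier, fourier_apply, ContinuousMap.coe_mk]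
  have : ∀ s : Finset (Fin D), ∏ i ∈ s, ((AddCircle.toCircle (n i • (x i : UnitAddCircle)) : Circle) : ℂ) =
      (AddCircle.toCircle (∑ i ∈ s, n i • (x i : UnitAddCircle)) : ℂ) := by
    intro s
    induction s using Finset.cons_induction with
    | empty => simp
    | cons a s ha ih =>
      rw [Finset.prod_cons, Finset.sum_cons, AddCircle.toCircle_add, ih]; simp
  exact this _

/-- uniform equidistribution along quadratic sequences -/
def Equi {D : ℕ} (α : UnitAddTorus (Fin D)) (F : C(UnitAddTorus (Fin D), ℂ)) : Prop :=
  ∀ ε : ℝ, 0 < ε → ∃ N0 : ℕ, ∀ N ≥ N0, ∀ β γ : UnitAddTorus (Fin D),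
    ‖∑ j ∈ Finset.range N, F (j ^ 2 • α + j • β + γ) - N * ∫ x, F x ∂(torusMeas D)‖ ≤ ε * N

lemma torus_integrable {D : ℕ} (F : C(UnitAddTorus (Fin D), ℂ)) : Integrable F (torusMeas D) :=
  F.continuous.integrable_of_hasCompactSupport (HasCompactSupport.of_compactSpace _)

lemma equi_mF {D : ℕ} (α : UnitAddTorus (Fin D))
    (hα : ∀ n : Fin D → ℤ, n ≠ 0 → ∀ h : ℕ, 0 < h → mFourier n α ^ h ≠ 1) (n : Fin D → ℤ) :
    Equi α (mFourier n) := by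
  intro ε hε
  by_cases hn : n = 0
  · subst hn
    refine ⟨0, fun N _ β γ => ?_⟩
    simp [mFourier_zero]
    positivity
  · have hint : ∫ x, mFourier n x ∂(torusMeas D) = 0 := by
      have := integral_add_left_eq_self (μ := torusMeas D) (fun x => mFourier n x) α
      simp_rw [mF_add] at this
      rw [integral_const_mul] at this
      have h1 := hα n hn 1 one_pos
      rw [pow_one] at h1
      have h2 : (mFourier n α - 1) * ∫ x, mFourier n x ∂(torusMeas D) = 0 := by
        linear_combination this
      exact (mul_eq_zero.1 h2).resolve_left (sub_ne_zero.2 h1)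
    obtain ⟨N0, h⟩ := weyl_sum (mFourier n α) (mF_norm n α) (hα n hn) ε hε
    refine ⟨N0, fun N hN β γ => ?_⟩
    rw [hint, mul_zero, sub_zero]
    simp_rw [mF_add, mF_nsmul]
    exact h N hN _ _ (mF_norm n β) (mF_norm n γ)

lemma equi_all {D : ℕ} (α : UnitAddTorus (Fin D))
    (hα : ∀ n : Fin D → ℤ, n ≠ 0 → ∀ h : ℕ, 0 < h → mFourier n α ^ h ≠ 1)
    (F : C(UnitAddTorus (Fin D), ℂ)) : Equi α F := by
  have hspan : ∀ G ∈ Submodule.span ℂ (Set.range (mFourier (d := Fin D))), Equi α G := by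
    intro G hG
    induction hG using Submodule.span_induction with
    | mem x h => obtain ⟨n, rfl⟩ := h; exact equi_mF α hα n
    | zero => intro ε hε; refine ⟨0, fun N _ β γ => ?_⟩; simp; positivity
    | add x y hx hy ix iy =>
      intro ε hε
      obtain ⟨N1, h1⟩ := ix (ε / 2) (by positivity)
      obtain ⟨N2, h2⟩ := iy (ε / 2) (by positivity)
      refine ⟨max N1 N2, fun N hN β γ => ?_⟩
      have a1 := h1 N (le_trans (le_max_left _ _) hN) β γ
      have a2 := h2 N (le_trans (le_max_right _ _) hN) β γ
      simp only [ContinuousMap.add_apply]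
      rw [integral_add (torus_integrable x) (torus_integrable y), Finset.sum_add_distrib, mul_add,
        add_sub_add_comm]
      refine (norm_add_le _ _).trans ?_
      linarith
    | smul a x hx ix =>
      intro ε hε
      obtain ⟨N1, h1⟩ := ix (ε / (‖a‖ + 1)) (by positivity)
      refine ⟨N1, fun N hN β γ => ?_⟩
      have a1 := h1 N hN β γ
      simp only [ContinuousMap.smul_apply, smul_eq_mul]
      rw [integral_const_mul, ← Finset.mul_sum, mul_left_comm, ← mul_sub, norm_mul]
      calc _ ≤ ‖a‖ * (ε / (‖a‖ + 1) * N) := by gcongr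
        _ ≤ (‖a‖ + 1) * (ε / (‖a‖ + 1) * N) := by gcongr; linarith
        _ = _ := by field_simp
  intro ε hε
  have hF : F ∈ (Submodule.span ℂ (Set.range (mFourier (d := Fin D)))).topologicalClosure := by
    rw [span_mFourier_closure_eq_top]; trivial
  obtain ⟨G, hG, hd⟩ := Metric.mem_closure_iff.1 hF (ε / 3) (by positivity)
  obtain ⟨N0, h0⟩ := hspan G hG (ε / 3) (by positivity)
  refine ⟨N0, fun N hN β γ => ?_⟩
  have a := h0 N hN β γ
  have hpt : ∀ x, ‖F x - G x‖ ≤ ε / 3 := fun x => by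
    rw [← dist_eq_norm]; exact (ContinuousMap.dist_apply_le_dist x).trans hd.le
  have b1 : ‖∑ j ∈ Finset.range N, F (j ^ 2 • α + j • β + γ) -
      ∑ j ∈ Finset.range N, G (j ^ 2 • α + j • β + γ)‖ ≤ N * (ε / 3) := by
    rw [← Finset.sum_sub_distrib]
    refine (norm_sum_le _ _).trans ((Finset.sum_le_sum fun j _ => hpt _).trans ?_)
    simp
  have b2 : ‖∫ x, F x ∂(torusMeas D) - ∫ x, G x ∂(torusMeas D)‖ ≤ ε / 3 := by
    rw [← integral_sub (torus_integrable F) (torus_integrable G)]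
    simpa using norm_integral_le_of_norm_le_const (μ := torusMeas D) (Filter.Eventually.of_forall hpt)
  have b3 : ‖(N : ℂ) * (∫ x, G x ∂(torusMeas D) - ∫ x, F x ∂(torusMeas D))‖ ≤ N * (ε / 3) := by
    rw [norm_mul, Complex.norm_natCast, norm_sub_rev]
    gcongr
  calc _ = ‖(∑ j ∈ Finset.range N, F (j ^ 2 • α + j • β + γ) -
      ∑ j ∈ Finset.range N, G (j ^ 2 • α + j • β + γ)) +
      (∑ j ∈ Finset.range N, G (j ^ 2 • α + j • β + γ) - N * ∫ x, G x ∂(torusMeas D)) +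
      (N : ℂ) * (∫ x, G x ∂(torusMeas D) - ∫ x, F x ∂(torusMeas D))‖ := by
        congr 1; ring
    _ ≤ _ := norm_add₃_le
    _ ≤ ε * N := by linarith

lemma hit_open {D : ℕ} (α : UnitAddTorus (Fin D))
    (hα : ∀ n : Fin D → ℤ, n ≠ 0 → ∀ h : ℕ, 0 < h → mFourier n α ^ h ≠ 1)
    (U : Set (UnitAddTorus (Fin D))) (hU : IsOpen U) (hU0 : (0 : UnitAddTorus (Fin D)) ∈ U) :
    ∃ N : ℕ, ∀ β γ : UnitAddTorus (Fin D), ∃ j < N, j ^ 2 • α + j • β + γ ∈ U := by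
  obtain ⟨f, hf0, hf1, hf⟩ := exists_continuous_zero_one_of_isClosed (X := UnitAddTorus (Fin D))
    (s := Uᶜ) (t := {0}) hU.isClosed_compl isClosed_singleton (by simpa using hU0)
  let F : C(UnitAddTorus (Fin D), ℂ) := ⟨fun x => (f x : ℂ), by fun_prop⟩
  have hpos : 0 < ∫ x, f x ∂(torusMeas D) := by
    refine f.continuous.integral_pos_of_hasCompactSupport_nonneg_nonzero
      (HasCompactSupport.of_compactSpace _) (fun x => (hf x).1) (x := 0) ?_
    rw [hf1 rfl]; simp
  set I := ∫ x, f x ∂(torusMeas D)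
  have hI : ∫ x, F x ∂(torusMeas D) = (I : ℂ) := integral_ofReal
  obtain ⟨N0, h0⟩ := equi_all α hα F (I / 2) (by positivity)
  refine ⟨N0 + 1, fun β γ => ?_⟩
  by_contra! hcon
  have h1 := h0 (N0 + 1) (by omega) β γ
  rw [Finset.sum_eq_zero, hI] at h1
  · rw [zero_sub, norm_neg, norm_mul, Complex.norm_natCast, Complex.norm_real,
      Real.norm_of_nonneg hpos.le] at h1
    have : (0 : ℝ) < ((N0 + 1 : ℕ) : ℝ) := by positivity
    nlinarith
  · intro j hj
    have := hf0 (hcon j (Finset.mem_range.1 hj))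
    simp only [F, ContinuousMap.coe_mk]
    rw [this]; simp

end Equidistribution

lemma torus_coe_sum {ι : Type*} (s : Finset ι) (f : ι → ℝ) :
    ((∑ l ∈ s, f l : ℝ) : UnitAddCircle) = ∑ l ∈ s, (f l : UnitAddCircle) :=
  map_sum (QuotientAddGroup.mk' (AddSubgroup.zmultiples (1 : ℝ))) f s

lemma irr_coe_ne {r : ℝ} (hr : Irrational r) : (r : UnitAddCircle) ≠ 0 := by
  intro h
  obtain ⟨n, hn⟩ := AddCircle.coe_eq_zero_iff (1 : ℝ) |>.1 h
  refine hr ⟨n, ?_⟩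
  simpa using hn

/-- Main theorem: for every finite non-spherical X ⊂ ℝ^d there is m such that for every n
there is a red/blue colouring of ℝ^n (red = membership in R) with no red copy of X and no
blue progression of m collinear points with consecutive points at unit distance. -/
theorem stmt_11 (d : ℕ) (X : Set (EuclideanSpace ℝ (Fin d)))
    (hfin : X.Finite) (hX : ¬ Spherical X) :
    ∃ m : ℕ, ∀ n : ℕ, ∃ R : Set (EuclideanSpace ℝ (Fin n)),
      (¬ ∃ Y : Set (EuclideanSpace ℝ (Fin n)), IsCopy X Y ∧ Y ⊆ R) ∧
      (¬ ∃ (w : Fin m → EuclideanSpace ℝ (Fin n)) (u : EuclideanSpace ℝ (Fin n)),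
        ‖u‖ = 1 ∧ (∀ j : Fin m, ∀ hj : (j : ℕ) + 1 < m,
            w ⟨(j : ℕ) + 1, hj⟩ = w j + u) ∧
        ∀ j : Fin m, w j ∉ R) := by
  classical
  obtain ⟨s, rfl⟩ := hfin.exists_finset_coe
  -- a relation witnessing non-sphericity
  obtain ⟨c, hc0, hc1, hcb⟩ : ∃ c : EuclideanSpace ℝ (Fin d) → ℝ, ∑ x ∈ s, c x = 0 ∧
      ∑ x ∈ s, c x • x = 0 ∧ ∑ x ∈ s, c x * ‖x‖ ^ 2 ≠ 0 := by
    by_contra! hcon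
    obtain ⟨p, ρ, hp⟩ := exists_coeff s hcon
    exact hX ⟨d, id, p, ρ, fun _ _ _ _ => rfl, fun x hx => hp x (by simpa using hx)⟩
  set b := ∑ x ∈ s, c x * ‖x‖ ^ 2 with hb
  obtain ⟨D, e, k, he, hk⟩ := exists_zbasis s c
  obtain ⟨l, hl⟩ := exists_scale
    (insert b (Set.range fun n : {n : Fin D → ℤ // n ≠ 0} => ∑ i, (n.1 i : ℝ) * e i))
    ((Set.countable_range _).insert b) (by
      rintro r (rfl | ⟨n, rfl⟩)
      · exact hcb
      · exact he n.1 n.2)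
  have hlb : Irrational (l * b) := hl b (Set.mem_insert _ _)
  have hln : ∀ n : Fin D → ℤ, n ≠ 0 → Irrational (l * ∑ i, (n i : ℝ) * e i) := fun n hn =>
    hl _ (Set.mem_insert_of_mem _ ⟨⟨n, hn⟩, rfl⟩)
  -- the map to the torus
  let P : ℝ → UnitAddTorus (Fin D) := fun y i => ((l * e i * y : ℝ) : UnitAddCircle)
  have hα : ∀ n : Fin D → ℤ, n ≠ 0 → ∀ h : ℕ, 0 < h → UnitAddTorus.mFourier n (P 1) ^ h ≠ 1 := by
    intro n hn h hh heq
    have e1 : h • P 1 = fun i => ((h * (l * e i) : ℝ) : UnitAddCircle) := by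
      funext i
      simp only [P, Pi.smul_apply, mul_one]
      rw [← AddCircle.coe_nsmul, nsmul_eq_mul]
    rw [← mF_nsmul, e1, mF_coe] at heq
    have e2 : ((∑ i, (n i : ℝ) * (h * (l * e i)) : ℝ) : UnitAddCircle) = 0 := by
      apply AddCircle.injective_toCircle one_ne_zero
      apply Subtype.ext
      rw [heq]; simp
    have e3 : (∑ i, (n i : ℝ) * (h * (l * e i)) : ℝ) = h * (l * ∑ i, (n i : ℝ) * e i) := by
      rw [Finset.mul_sum, Finset.mul_sum]
      exact Finset.sum_congr rfl fun i _ => by ring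
    rw [e3] at e2
    exact irr_coe_ne ((hln n hn).natCast_mul hh.ne') e2
  -- the open set
  let δ : ℝ := ‖((l * b : ℝ) : UnitAddCircle)‖
  have hδ : 0 < δ := norm_pos_iff.2 (irr_coe_ne hlb)
  have hs : s.Nonempty := by
    by_contra h
    rw [Finset.not_nonempty_iff_eq_empty] at h
    subst h
    simp [hb] at hcb
  have hcard : (0 : ℝ) < s.card := by exact_mod_cast hs.card_pos
  let U : Set (UnitAddTorus (Fin D)) := ⋂ x ∈ s, {t | ‖∑ i, k x i • t i‖ < δ / s.card}
  have hUo : IsOpen U := by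
    refine isOpen_biInter_finset fun x _ => isOpen_lt ?_ continuous_const
    fun_prop
  have hU0 : (0 : UnitAddTorus (Fin D)) ∈ U := by
    simp only [U, Set.mem_iInter, Set.mem_ofPred_eq]
    intro x _
    simpa using div_pos hδ hcard
  obtain ⟨N, hN⟩ := hit_open (P 1) hα U hUo hU0
  refine ⟨N, fun n => ⟨{x | P (‖x‖ ^ 2) ∈ U}, ?_, ?_⟩⟩
  · rintro ⟨Y, ⟨f, hf, rfl⟩, hYR⟩
    have hcopy := copy_sum s c hc0 hc1 f
      (fun x hx y hy => hf x (by simpa using hx) y (by simpa using hy))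
    have hlt : ∀ x ∈ s, ‖((l * (c x * ‖f x‖ ^ 2) : ℝ) : UnitAddCircle)‖ < δ / s.card := by
      intro x hx
      have h1 : P (‖f x‖ ^ 2) ∈ U := hYR ⟨x, by simpa using hx, rfl⟩
      have h2 := Set.mem_iInter₂.1 h1 x hx
      simp only [Set.mem_ofPred_eq, P] at h2
      have h3 : ((l * (c x * ‖f x‖ ^ 2) : ℝ) : UnitAddCircle) =
          ∑ i, k x i • ((l * e i * ‖f x‖ ^ 2 : ℝ) : UnitAddCircle) := by
        rw [hk x hx, Finset.sum_mul, Finset.mul_sum, torus_coe_sum]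
        refine Finset.sum_congr rfl fun i _ => ?_
        rw [← AddCircle.coe_zsmul, zsmul_eq_mul]
        congr 1; ring
      rw [h3]; exact h2
    have hsum : ((l * b : ℝ) : UnitAddCircle) =
        ∑ x ∈ s, ((l * (c x * ‖f x‖ ^ 2) : ℝ) : UnitAddCircle) := by
      rw [hb, ← hcopy, Finset.mul_sum, torus_coe_sum]
    have : δ < δ := by
      calc δ = ‖∑ x ∈ s, ((l * (c x * ‖f x‖ ^ 2) : ℝ) : UnitAddCircle)‖ := by rw [← hsum]
        _ ≤ ∑ x ∈ s, ‖((l * (c x * ‖f x‖ ^ 2) : ℝ) : UnitAddCircle)‖ := norm_sum_le _ _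
        _ < ∑ x ∈ s, δ / s.card := Finset.sum_lt_sum_of_nonempty hs hlt
        _ = δ := by rw [Finset.sum_const, nsmul_eq_mul]; field_simp
    exact lt_irrefl _ this
  · rintro ⟨w, u, hu, hw, hR⟩
    have hNpos : 0 < N := by
      obtain ⟨j, hj, _⟩ := hN 0 0
      omega
    set w0 := w ⟨0, hNpos⟩ with hw0
    have hwj : ∀ j (hj : j < N), w ⟨j, hj⟩ = w0 + (j : ℝ) • u := by
      intro j
      induction j with
      | zero => intro hj; simp [hw0]
      | succ j ih =>
        intro hj
        have := hw ⟨j, by omega⟩ hj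
        rw [this, ih (by omega), add_assoc]
        congr 1
        push_cast
        rw [add_smul, one_smul]
    obtain ⟨j, hj, hjU⟩ := hN (P (2 * inner ℝ w0 u)) (P (‖w0‖ ^ 2))
    apply hR ⟨j, hj⟩
    show P (‖w ⟨j, hj⟩‖ ^ 2) ∈ U
    convert hjU using 1
    funext i
    simp only [P, Pi.add_apply, Pi.smul_apply]
    rw [← AddCircle.coe_nsmul, ← AddCircle.coe_nsmul, ← AddCircle.coe_add, ← AddCircle.coe_add,
      hwj j hj, norm_add_sq_real, norm_smul, inner_smul_right, hu]
    congr 1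
    simp only [nsmul_eq_mul, Real.norm_eq_abs, mul_one, sq_abs]
    push_cast
    ring
end
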